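/- Let T be a minimum spanning tree of G and let e₁, e₂, …, eₙ be distinct nontree edges of G. Define T₀ = T and, for each m from 1 to n, let T_m be obtained from T_{m−1} by removing a maximum-weight edge among the edges of the path in T_{m−1} between the endpoints of e_m that do not belong to {e₁, …, e_{m−1}}, and adding the edge e_m. Then T_n = T_{e₁,…,eₙ} is a spanning tree of G containing all the edges e₁, …, eₙ, and cost(T_{e₁,…,eₙ}) ≤ cost(T') for every spanning tree T' of G containing all the edges e₁, …, eₙ; i.e., T_{e₁,…,eₙ} is a minimum spanning tree among those containing e₁, …, eₙ. -/

import Mathlib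

open SimpleGraph

/-- `T` is a spanning tree of `G`: a connected acyclic (spanning) subgraph of `G`. -/
def IsSpanningTree {V : Type*} (G T : SimpleGraph V) : Prop :=
  T ≤ G ∧ T.IsTree

/-- The cost of a graph: the sum of the weights of its edges. -/
noncomputable def cost {V : Type*} (w : Sym2 V → ℝ) (T : SimpleGraph V) : ℝ :=
  ∑ᶠ e ∈ T.edgeSet, w e

/-- `T` is a minimum spanning tree of `G` with respect to the weights `w`. -/
def IsMST {V : Type*} (G : SimpleGraph V) (w : Sym2 V → ℝ) (T : SimpleGraph V) : Prop :=
  IsSpanningTree G T ∧ ∀ T' : SimpleGraph V, IsSpanningTree G T' → cost w T ≤ cost w T'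

/-!
Let `T` have minimum cost among the spanning trees containing `S`, and let `r ∉ S` be a heaviest
edge outside `S` on the path of `T` from `u` to `v`. Given a spanning tree `T'` containing `S` and
`s(u, v)`, deleting `s(u, v)` from `T'` separates `u` from `v`, so the path of `T` has an edge `f`
joining the two sides, and `f ∉ S`. Then `T' - s(u, v) + f` is a spanning tree containing `S`, so
`cost T ≤ cost T' - w s(u, v) + w f ≤ cost T' - w s(u, v) + w r`, which rearranges to
`cost (T - r + s(u, v)) ≤ cost T'`. Hence each imposition preserves minimality.
-/

/-- The result of exchanging the edge `r` of `T` for an edge between `u` and `v`. The new edge is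
given by its endpoints so that it can be related to walks from `u` to `v`; no edge is added if
`u = v`. -/
def exchangeEdge {V : Type*} (T : SimpleGraph V) (r : Sym2 V) (u v : V) : SimpleGraph V :=
  T.deleteEdges {r} ⊔ edge u v

/-- `T` has minimum cost among the spanning trees of `G` that contain the edges in `S`. -/
def IsMSTContaining {V : Type*} (G : SimpleGraph V) (w : Sym2 V → ℝ) (S : Set (Sym2 V))
    (T : SimpleGraph V) : Prop :=
  IsSpanningTree G T ∧ S ⊆ T.edgeSet ∧
    ∀ T' : SimpleGraph V, IsSpanningTree G T' → S ⊆ T'.edgeSet → cost w T ≤ cost w T'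

section Separation

variable {V : Type*} {T : SimpleGraph V} {u v : V}

lemma not_reachable_deleteEdges_of_mem_edges_of_isPath {r : Sym2 V} (hT : T.IsAcyclic)
    {p : T.Walk u v} (hp : p.IsPath) (hr : r ∈ p.edges) :
    ¬ (T.deleteEdges {r}).Reachable u v := by
  classical
  induction r with | _ x y
  rw [reachable_deleteEdges_iff_exists_walk]
  rintro ⟨q, hq⟩
  have := hT.subsingleton_path u v
  have hpq : p = q.bypass :=
    congrArg Subtype.val (Subsingleton.elim (⟨p, hp⟩ : T.Path u v) q.toPath)
  exact hq (q.edges_bypass_subset_edges (hpq ▸ hr))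

lemma exists_mem_edges_not_reachable {H : SimpleGraph V} (h : ¬ H.Reachable u v)
    (p : T.Walk u v) : ∃ x y, s(x, y) ∈ p.edges ∧ ¬ H.Reachable x y := by
  obtain ⟨⟨⟨x, y⟩, hxy⟩, hd, hux, huy⟩ :=
    p.exists_boundary_dart {z | H.Reachable u z} (Reachable.refl u) h
  exact ⟨x, y, List.mem_map_of_mem (f := Dart.edge) hd, fun hxy => huy (hux.trans hxy)⟩

end Separation

section Exchange

variable {V : Type*} {T : SimpleGraph V} {r : Sym2 V} {u v : V}

lemma fromEdgeSet_sdiff_union_eq_exchangeEdge :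
    fromEdgeSet ((T.edgeSet \ {r}) ∪ {s(u, v)}) = exchangeEdge T r u v := by
  rw [exchangeEdge, edge, ← fromEdgeSet_edgeSet (T.deleteEdges {r}), edgeSet_deleteEdges,
    fromEdgeSet_union]

lemma edgeSet_exchangeEdge (huv : u ≠ v) :
    (exchangeEdge T r u v).edgeSet = insert s(u, v) (T.edgeSet \ {r}) := by
  rw [exchangeEdge, edgeSet_sup, edgeSet_deleteEdges, edgeSet_edge_of_ne huv, Set.union_singleton]

lemma ne_of_not_reachable_deleteEdges (h : ¬ (T.deleteEdges {r}).Reachable u v) : u ≠ v := by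
  rintro rfl
  exact h (Reachable.refl u)

lemma eq_of_mem_edgeSet_of_not_reachable_deleteEdges
    (h : ¬ (T.deleteEdges {r}).Reachable u v) (huv : s(u, v) ∈ T.edgeSet) : s(u, v) = r :=
  by_contra fun hne => h (deleteEdges_adj.mpr ⟨huv, hne⟩).reachable

lemma subset_edgeSet_exchangeEdge {S : Set (Sym2 V)} (huv : u ≠ v) (hS : S ⊆ T.edgeSet)
    (hr : r ∉ S) : insert s(u, v) S ⊆ (exchangeEdge T r u v).edgeSet := by
  rw [edgeSet_exchangeEdge huv]
  exact Set.insert_subset_insert (Set.subset_sdiff_singleton hS hr)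

lemma connected_exchangeEdge (hT : T.Connected) (h : ¬ (T.deleteEdges {r}).Reachable u v) :
    (exchangeEdge T r u v).Connected := by
  have hle : T.deleteEdges {r} ≤ exchangeEdge T r u v := le_sup_left
  have huv : (exchangeEdge T r u v).Adj u v :=
    ((edge_le_iff _).mp le_sup_right).resolve_left (ne_of_not_reachable_deleteEdges h)
  obtain ⟨p, hp⟩ := hT.exists_isPath u v
  have hrp : r ∈ p.edges := p.mem_edges_of_not_reachable_deleteEdges h
  -- `r` occurs only once on `p`, so each end of `r` is joined to `u` or to `v` by a part of `p`
  -- that avoids `r`.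
  have hreach {x y : V} (hxy : s(x, y) = r) : (exchangeEdge T r u v).Reachable u y := by
    subst hxy
    by_contra huy
    exact hp.isTrail.not_mem_edges_of_not_reachable (fun huH => huy (huH.mono hle))
      (fun hvH => huy (huv.reachable.trans (hvH.mono hle))) hrp
  have := hT.nonempty
  refine ⟨fun a b => by_contra fun hab => ?_⟩
  obtain ⟨q⟩ := hT.preconnected a b
  obtain ⟨x, y, hxyq, hxy⟩ := exists_mem_edges_not_reachable hab q
  have hxyr : s(x, y) = r := eq_of_mem_edgeSet_of_not_reachable_deleteEdges
    (fun hxyH => hxy (hxyH.mono hle)) (q.edges_subset_edgeSet hxyq)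
  exact hxy ((hreach (Sym2.eq_swap.trans hxyr)).symm.trans (hreach hxyr))

lemma isTree_exchangeEdge (hT : T.IsTree) (h : ¬ (T.deleteEdges {r}).Reachable u v) :
    (exchangeEdge T r u v).IsTree :=
  ⟨connected_exchangeEdge hT.connected h,
    (hT.isAcyclic.anti (deleteEdges_le _)).sup_edge_of_not_reachable h⟩

lemma IsSpanningTree.exchangeEdge {G : SimpleGraph V} (hT : IsSpanningTree G T)
    (huv : G.Adj u v) (h : ¬ (T.deleteEdges {r}).Reachable u v) :
    IsSpanningTree G (exchangeEdge T r u v) :=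
  ⟨sup_le ((deleteEdges_le _).trans hT.1) ((edge_le_iff _).mpr (.inr huv)),
    isTree_exchangeEdge hT.2 h⟩

lemma cost_exchangeEdge {w : Sym2 V → ℝ} (hw : (T.edgeSet ∩ Function.support w).Finite)
    (hr : r ∈ T.edgeSet) (h : ¬ (T.deleteEdges {r}).Reachable u v) :
    cost w (exchangeEdge T r u v) = cost w T - w r + w s(u, v) := by
  have huv : s(u, v) ∉ T.edgeSet \ {r} := fun huv =>
    huv.2 (eq_of_mem_edgeSet_of_not_reachable_deleteEdges h huv.1)
  have hfin : ((T.edgeSet \ {r}) ∩ Function.support w).Finite :=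
    hw.subset (Set.inter_subset_inter_left _ Set.sdiff_subset)
  have hT : cost w T = w r + ∑ᶠ e ∈ T.edgeSet \ {r}, w e := by
    rw [cost, ← finsum_mem_insert' w (fun hmem => hmem.2 rfl) hfin, Set.insert_sdiff_singleton,
      Set.insert_eq_of_mem hr]
  rw [hT, cost, edgeSet_exchangeEdge (ne_of_not_reachable_deleteEdges h),
    finsum_mem_insert' w huv hfin]
  ring

end Exchange

section Imposition

variable {V : Type*} {G : SimpleGraph V} {w : Sym2 V → ℝ}

lemma IsMST.isMSTContaining_empty {T : SimpleGraph V} (hT : IsMST G w T) :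
    IsMSTContaining G w ∅ T :=
  ⟨hT.1, Set.empty_subset _, fun T' hT' _ => hT.2 T' hT'⟩

lemma IsMSTContaining.insert_edge {T : SimpleGraph V} {S : Set (Sym2 V)} {r : Sym2 V} {u v : V}
    (hw : (G.edgeSet ∩ Function.support w).Finite) (hT : IsMSTContaining G w S T)
    (huv : G.Adj u v) {p : T.Walk u v} (hp : p.IsPath) (hr : r ∈ p.edges) (hrS : r ∉ S)
    (hmax : ∀ f ∈ p.edges, f ∉ S → w f ≤ w r) :
    IsMSTContaining G w (insert s(u, v) S) (exchangeEdge T r u v) := by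
  obtain ⟨hspan, hST, hmin⟩ := hT
  have hfin {F : SimpleGraph V} (hF : IsSpanningTree G F) :
      (F.edgeSet ∩ Function.support w).Finite :=
    hw.subset (Set.inter_subset_inter_left _ (edgeSet_mono hF.1))
  have hsep := not_reachable_deleteEdges_of_mem_edges_of_isPath hspan.2.isAcyclic hp hr
  have huvS : s(u, v) ∉ S := fun huvS =>
    hrS (eq_of_mem_edgeSet_of_not_reachable_deleteEdges hsep (hST huvS) ▸ huvS)
  refine ⟨hspan.exchangeEdge huv hsep, subset_edgeSet_exchangeEdge huv.ne hST hrS,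
    fun T' hT' hinsert => ?_⟩
  obtain ⟨huvT', hST'⟩ := Set.insert_subset_iff.mp hinsert
  have hbridge : T'.IsBridge s(u, v) := isAcyclic_iff_forall_isBridge.mp hT'.2.isAcyclic huvT'
  obtain ⟨x, y, hxyp, hsep'⟩ := exists_mem_edges_not_reachable (isBridge_iff.mp hbridge) p
  have hxy : G.Adj x y := hspan.1 (p.adj_of_mem_edges hxyp)
  have hxyS : s(x, y) ∉ S := fun hxyS =>
    huvS (eq_of_mem_edgeSet_of_not_reachable_deleteEdges hsep' (hST' hxyS) ▸ hxyS)
  have hle : cost w T ≤ cost w T' - w s(u, v) + w s(x, y) := by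
    rw [← cost_exchangeEdge (hfin hT') huvT' hsep']
    exact hmin _ (hT'.exchangeEdge hxy hsep')
      ((Set.subset_insert _ _).trans (subset_edgeSet_exchangeEdge hxy.ne hST' huvS))
  calc cost w (exchangeEdge T r u v)
      = cost w T - w r + w s(u, v) :=
        cost_exchangeEdge (hfin hspan) (p.edges_subset_edgeSet hr) hsep
    _ ≤ cost w T' := by linarith [hmax _ hxyp hxyS]

end Imposition

theorem mst_iterated_imposition_minimum_general {V : Type*} {G : SimpleGraph V}
    {w : Sym2 V → ℝ} (hw : (G.edgeSet ∩ Function.support w).Finite) {n : ℕ} {a b : Fin n → V}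
    (hedge : ∀ m, G.Adj (a m) (b m)) {Ts : Fin (n + 1) → SimpleGraph V}
    (h0 : IsMST G w (Ts 0))
    (hstep : ∀ m : Fin n, ∃ p : (Ts m.castSucc).Walk (a m) (b m), p.IsPath ∧
      ∃ r ∈ p.edges,
        (∀ m' < m, r ≠ s(a m', b m')) ∧
        (∀ f ∈ p.edges, (∀ m' < m, f ≠ s(a m', b m')) → w f ≤ w r) ∧
        Ts m.succ = fromEdgeSet (((Ts m.castSucc).edgeSet \ {r}) ∪ {s(a m, b m)})) :
    IsMSTContaining G w (Set.range fun m => s(a m, b m)) (Ts (Fin.last n)) := by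
  have hprefix (i : Fin (n + 1)) :
      IsMSTContaining G w ((fun m => s(a m, b m)) '' {m | m.castSucc < i}) (Ts i) := by
    induction i using Fin.induction with
    | zero => simpa using h0.isMSTContaining_empty
    | succ m ih =>
      obtain ⟨p, hp, r, hr, hrS, hmax, hTs⟩ := hstep m
      have hinsert : {m' : Fin n | m'.castSucc < m.succ} =
          insert m {m' | m'.castSucc < m.castSucc} := by
        ext m'
        simp [Fin.castSucc_lt_succ_iff, le_iff_eq_or_lt]
      rw [hTs, fromEdgeSet_sdiff_union_eq_exchangeEdge, hinsert, Set.image_insert_eq]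
      refine ih.insert_edge hw (hedge m) hp hr ?_ fun f hf hfS => hmax f hf ?_
      · rintro ⟨m', hlt, rfl⟩
        exact hrS m' hlt rfl
      · rintro m' hlt rfl
        exact hfS ⟨m', hlt, rfl⟩
  simpa [Fin.castSucc_lt_last] using hprefix (Fin.last n)

/-- Let `T` be an MST of `G` and `e₁,…,eₙ` (with `eₘ = {a m, b m}`) distinct nontree
edges of `G`. Let `T₀ = T` and let `Tₘ` be obtained from `Tₘ₋₁` by removing a
maximum-weight edge, among the edges of the path in `Tₘ₋₁` between the endpoints of
`eₘ` that are not among `e₁,…,eₘ₋₁`, and adding `eₘ`. Then `Tₙ = T_{e₁,…,eₙ}` is a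
spanning tree of `G` containing all of `e₁,…,eₙ`, of minimum cost among all spanning
trees of `G` containing `e₁,…,eₙ`. -/
theorem mst_iterated_imposition_minimum {V : Type*} [Fintype V]
    (G : SimpleGraph V) (hG : G.Connected) (w : Sym2 V → ℝ)
    (T : SimpleGraph V) (hT : IsMST G w T)
    (n : ℕ) (a b : Fin n → V)
    (hedge : ∀ m : Fin n, G.Adj (a m) (b m))
    (hnt : ∀ m : Fin n, s(a m, b m) ∉ T.edgeSet)
    (hdist : Function.Injective fun m : Fin n => s(a m, b m))
    (Ts : Fin (n + 1) → SimpleGraph V)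
    (h0 : Ts 0 = T)
    (hstep : ∀ m : Fin n, ∃ p : (Ts m.castSucc).Walk (a m) (b m), p.IsPath ∧
      ∃ r ∈ p.edges,
        (∀ m' : Fin n, m' < m → r ≠ s(a m', b m')) ∧
        (∀ f ∈ p.edges, (∀ m' : Fin n, m' < m → f ≠ s(a m', b m')) → w f ≤ w r) ∧
        Ts m.succ = fromEdgeSet (((Ts m.castSucc).edgeSet \ {r}) ∪ {s(a m, b m)})) :
    IsSpanningTree G (Ts (Fin.last n)) ∧
    (∀ m : Fin n, s(a m, b m) ∈ (Ts (Fin.last n)).edgeSet) ∧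
    ∀ T' : SimpleGraph V, IsSpanningTree G T' →
      (∀ m : Fin n, s(a m, b m) ∈ T'.edgeSet) →
      cost w (Ts (Fin.last n)) ≤ cost w T' := by
  subst h0
  simpa only [IsMSTContaining, Set.range_subset_iff] using
    mst_iterated_imposition_minimum_general (Set.toFinite _) hedge hT hstep
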